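/- arXiv:math/0101251 — 2 statements merged into one kernel-verified Lean document; each statement's English description precedes it below -/
import Mathlib

section
/- Suppose k ≥ 2 and k' ≥ 2, and e₁,…,e_k and e'₁,…,e'_{k'} are integers with all e_i ≥ 2, all e'_i ≥ 2, some e_j ≥ 3, and some e'_j ≥ 3. If B(e₁−1, e₂, …, e_{k−1}, e_k−1) = B(e'₁−1, e'₂, …, e'_{k'−1}, e'_{k'}−1), then k = k' and e_i = e'_i for all i. -/
/-- The matrix `[[0,-1],[1,x]]`. -/
def Mb (x : ℤ) : Matrix (Fin 2) (Fin 2) ℤ := !![0, -1; 1, x]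

/-- The product `[[0,-1],[1,b_k]] ⋯ [[0,-1],[1,b₁]]` for a list `[b₁,…,b_k]`. -/
def prodB (L : List ℤ) : Matrix (Fin 2) (Fin 2) ℤ := ((L.map Mb).reverse).prod

/-- `B(b₁,…,b_k) = [[0,1],[-1,0]] · [[0,-1],[1,b_k]] ⋯ [[0,-1],[1,b₁]]`. -/
def Bmat (L : List ℤ) : Matrix (Fin 2) (Fin 2) ℤ := !![0, 1; -1, 0] * prodB L

/-- The list `e₁-1, e₂, …, e_{k-1}, e_k-1`. -/
def cuspList (k : ℕ) (e : Fin k → ℤ) : List ℤ :=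
  List.ofFn fun i => e i - (if i.val = 0 ∨ i.val = k - 1 then 1 else 0)

/-!
Prepending `x` to a list whose product has bottom row `(q, p)` gives the bottom row `(p, x p - q)`.
If all entries of the list are at least `2`, then `0 ≤ q < p`, so `x` and `q` are recovered by
division with remainder and, inductively, so is the whole list; the first entry may even be any
integer. Appending `y` moves minus the old bottom row to the top, so the top row of a product
determines all entries but the last one, which may again be any integer and is then read off the
bottom row. Hence only the interior entries need to be at least `2`, and lowering the two end
entries by `1` is harmless.
-/

theorem prodB_cons (x : ℤ) (L : List ℤ) : prodB (x :: L) = prodB L * Mb x := by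
  simp [prodB]

theorem prodB_concat (L : List ℤ) (x : ℤ) : prodB (L ++ [x]) = Mb x * prodB L := by
  simp [prodB]

theorem prodB_cons_one_zero (x : ℤ) (L : List ℤ) : prodB (x :: L) 1 0 = prodB L 1 1 := by
  simp [prodB_cons, Mb, Matrix.mul_apply]

theorem prodB_cons_one_one (x : ℤ) (L : List ℤ) :
    prodB (x :: L) 1 1 = prodB L 1 1 * x - prodB L 1 0 := by
  simp [prodB_cons, Mb, Matrix.mul_apply, neg_add_eq_sub]

theorem prodB_concat_zero (L : List ℤ) (x : ℤ) (j : Fin 2) :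
    prodB (L ++ [x]) 0 j = -prodB L 1 j := by
  simp [prodB_concat, Mb, Matrix.mul_apply]

theorem prodB_bottom_row_bounds {L : List ℤ} (hL : ∀ x ∈ L, 2 ≤ x) :
    0 ≤ prodB L 1 0 ∧ prodB L 1 0 < prodB L 1 1 := by
  induction L with
  | nil => simp [prodB]
  | cons x L ih =>
    obtain ⟨hx, hL⟩ := List.forall_mem_cons.mp hL
    obtain ⟨h_nonneg, h_lt⟩ := ih hL
    rw [prodB_cons_one_zero, prodB_cons_one_one]
    have h_mul : prodB L 1 1 * 2 ≤ prodB L 1 1 * x :=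
      mul_le_mul_of_nonneg_left hx (h_nonneg.trans h_lt.le)
    constructor <;> linarith

theorem prodB_cons_one_zero_pos (x : ℤ) {L : List ℤ} (hL : ∀ y ∈ L, 2 ≤ y) :
    0 < prodB (x :: L) 1 0 := by
  obtain ⟨h_nonneg, h_lt⟩ := prodB_bottom_row_bounds hL
  exact prodB_cons_one_zero x L ▸ h_nonneg.trans_lt h_lt

theorem prodB_one_zero_nonneg {L : List ℤ} (hL : ∀ x ∈ L.tail, 2 ≤ x) : 0 ≤ prodB L 1 0 := by
  cases L with
  | nil => simp [prodB]
  | cons x L => exact (prodB_cons_one_zero_pos x hL).le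

theorem eq_and_eq_of_mul_sub_eq_mul_sub {p q q' x x' : ℤ} (hq : 0 ≤ q) (hqp : q < p)
    (hq' : 0 ≤ q') (hqp' : q' < p) (h : p * x - q = p * x' - q') : x = x' ∧ q = q' := by
  have h_dvd : p ∣ q - q' := ⟨x - x', by linarith⟩
  have h_eq : q = q' :=
    sub_eq_zero.mp (Int.eq_zero_of_abs_lt_dvd h_dvd (abs_sub_lt_of_nonneg_of_lt hq hqp hq' hqp'))
  exact ⟨mul_left_cancel₀ (hq.trans_lt hqp).ne' (by linarith), h_eq⟩

theorem eq_of_prodB_bottom_row_eq {L L' : List ℤ} (hL : ∀ x ∈ L.tail, 2 ≤ x)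
    (hL' : ∀ x ∈ L'.tail, 2 ≤ x) (h : prodB L 1 = prodB L' 1) : L = L' := by
  induction L generalizing L' with
  | nil =>
    cases L' with
    | nil => rfl
    | cons y L' => exact absurd (congrFun h 0) (prodB_cons_one_zero_pos y hL').ne
  | cons x L ih =>
    cases L' with
    | nil => exact absurd (congrFun h 0) (prodB_cons_one_zero_pos x hL).ne'
    | cons y L' =>
      rw [List.tail_cons] at hL hL'
      have h_left := congrFun h 0
      have h_right := congrFun h 1
      rw [prodB_cons_one_zero, prodB_cons_one_zero] at h_left
      rw [prodB_cons_one_one, prodB_cons_one_one, ← h_left] at h_right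
      obtain ⟨h_nonneg, h_lt⟩ := prodB_bottom_row_bounds hL
      obtain ⟨h_nonneg', h_lt'⟩ := prodB_bottom_row_bounds hL'
      obtain ⟨rfl, h_zero⟩ :=
        eq_and_eq_of_mul_sub_eq_mul_sub h_nonneg h_lt h_nonneg' (h_left ▸ h_lt') h_right
      have h_row : prodB L 1 = prodB L' 1 := funext (Fin.forall_fin_two.mpr ⟨h_zero, h_left⟩)
      rw [ih (fun z hz ↦ hL z (List.mem_of_mem_tail hz))
        (fun z hz ↦ hL' z (List.mem_of_mem_tail hz)) h_row]

theorem prodB_concat_ne_one {L : List ℤ} (x : ℤ) (hL : ∀ y ∈ L.tail, 2 ≤ y) :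
    prodB (L ++ [x]) ≠ 1 := by
  intro h
  have h_entry : -prodB L 1 0 = 1 := by rw [← prodB_concat_zero L x, h, Matrix.one_apply_eq]
  linarith [prodB_one_zero_nonneg hL]

theorem Mb_injective : Function.Injective Mb := fun x y h ↦ by
  simpa [Mb] using congrFun₂ h 1 1

theorem isUnit_prodB (L : List ℤ) : IsUnit (prodB L) := by
  induction L with
  | nil => simp [prodB]
  | cons x L ih =>
    have h_unit : IsUnit (Mb x) := by simp [Matrix.isUnit_iff_isUnit_det, Mb]
    exact prodB_cons x L ▸ ih.mul h_unit

theorem prodB_injOn : Set.InjOn prodB {L | ∀ x ∈ L.dropLast.tail, 2 ≤ x} := by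
  intro L hL L' hL' h
  rw [Set.mem_ofPred_eq] at hL hL'
  rcases L.eq_nil_or_concat' with rfl | ⟨M, x, rfl⟩ <;>
    rcases L'.eq_nil_or_concat' with rfl | ⟨M', x', rfl⟩
  · rfl
  · rw [List.dropLast_concat] at hL'
    exact absurd h.symm (prodB_concat_ne_one x' hL')
  · rw [List.dropLast_concat] at hL
    exact absurd h (prodB_concat_ne_one x hL)
  · rw [List.dropLast_concat] at hL hL'
    have h_row : prodB M 1 = prodB M' 1 := by
      ext j
      rw [← neg_inj, ← prodB_concat_zero M x, ← prodB_concat_zero M' x', h]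
    obtain rfl := eq_of_prodB_bottom_row_eq hL hL' h_row
    rw [prodB_concat, prodB_concat] at h
    rw [Mb_injective ((isUnit_prodB M).mul_left_injective h)]

theorem Bmat_injOn : Set.InjOn Bmat {L | ∀ x ∈ L.dropLast.tail, 2 ≤ x} := by
  have h_unit : IsUnit (!![0, 1; -1, 0] : Matrix (Fin 2) (Fin 2) ℤ) := by
    simp [Matrix.isUnit_iff_isUnit_det]
  exact h_unit.mul_right_injective.comp_injOn prodB_injOn

theorem two_le_of_mem_cuspList_dropLast_tail {k : ℕ} {e : Fin k → ℤ}
    (he : ∀ i : Fin k, 0 < i.val → i.val + 1 < k → 2 ≤ e i) :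
    ∀ x ∈ (cuspList k e).dropLast.tail, 2 ≤ x := by
  intro x hx
  obtain ⟨i, hi, rfl⟩ := List.getElem_of_mem hx
  have hik : i + 1 < k - 1 := by
    simp only [cuspList, List.length_tail, List.length_dropLast, List.length_ofFn] at hi
    lia
  have h_interior : 2 ≤ e ⟨i + 1, by lia⟩ := he _ (Nat.succ_pos i) (Nat.add_lt_of_lt_sub hik)
  simpa [cuspList, hik.ne] using h_interior

theorem cuspList_injective (k : ℕ) : Function.Injective (cuspList k) := by
  intro e e' h
  funext i
  exact sub_left_injective (congrFun (List.ofFn_injective h) i)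

theorem stmt_4_general (k k' : ℕ) (e : Fin k → ℤ) (e' : Fin k' → ℤ)
    (he : ∀ i : Fin k, 0 < i.val → i.val + 1 < k → 2 ≤ e i)
    (he' : ∀ i : Fin k', 0 < i.val → i.val + 1 < k' → 2 ≤ e' i)
    (heq : Bmat (cuspList k e) = Bmat (cuspList k' e')) :
    k = k' ∧ ∀ (i : ℕ) (hi : i < k) (hi' : i < k'), e ⟨i, hi⟩ = e' ⟨i, hi'⟩ := by
  have h_list : cuspList k e = cuspList k' e' :=
    Bmat_injOn (two_le_of_mem_cuspList_dropLast_tail he)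
      (two_le_of_mem_cuspList_dropLast_tail he') heq
  obtain rfl : k = k' := by simpa [cuspList] using congrArg List.length h_list
  exact ⟨rfl, fun i hi _ ↦ congrFun (cuspList_injective k h_list) ⟨i, hi⟩⟩

theorem stmt_4 (k k' : ℕ) (hk : 2 ≤ k) (hk' : 2 ≤ k')
    (e : Fin k → ℤ) (e' : Fin k' → ℤ)
    (he : ∀ i, 2 ≤ e i) (he' : ∀ i, 2 ≤ e' i)
    (h3 : ∃ j, 3 ≤ e j) (h3' : ∃ j, 3 ≤ e' j)
    (heq : Bmat (cuspList k e) = Bmat (cuspList k' e')) :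
    k = k' ∧ ∀ (i : ℕ) (hi : i < k) (hi' : i < k'), e ⟨i, hi⟩ = e' ⟨i, hi'⟩ :=
  stmt_4_general k k' e e' (fun i _ _ ↦ he i) (fun i _ _ ↦ he' i) heq
end

section
/- In the presented group π below, the relations x₁² = x₂^{2d} y₂^{−c} and y₁ = x₂^{−2b} y₂^{a} hold. -/
/-- The relators of the fundamental group
`⟨x₁,y₁,x₂,y₂ | x₁⁻¹y₁x₁ = y₁⁻¹, x₂⁻¹y₂x₂ = y₂⁻¹, x₂² = x₁^{2a}y₁^{c}, y₂ = x₁^{2b}y₁^{d}⟩`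
of the link of the quotient-cusp classified by `[[a,b],[c,d]]`.
The generators `x₁, y₁, x₂, y₂` are indexed by `0, 1, 2, 3 : Fin 4`. -/
def quotientCuspRels (a b c d : ℕ) : Set (FreeGroup (Fin 4)) :=
  { (FreeGroup.of 0)⁻¹ * FreeGroup.of 1 * FreeGroup.of 0 * FreeGroup.of 1,
    (FreeGroup.of 2)⁻¹ * FreeGroup.of 3 * FreeGroup.of 2 * FreeGroup.of 3,
    (FreeGroup.of 2) ^ 2 * ((FreeGroup.of 0) ^ (2 * a) * (FreeGroup.of 1) ^ c)⁻¹,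
    FreeGroup.of 3 * ((FreeGroup.of 0) ^ (2 * b) * (FreeGroup.of 1) ^ d)⁻¹ }

/-!
Since `x₁` inverts `y₁`, its square commutes with `y₁`. Inside the abelian subgroup generated by
`x₁²` and `y₁`, the pair `(x₂², y₂)` arises from `(x₁², y₁)` by a matrix of exponents of
determinant one, so Cramer's rule recovers `x₁²` and `y₁`.
-/

section Group

variable {G : Type*} [Group G]

lemma zpow_cramer_left {u v : G} (huv : Commute u v) (a b c d : ℤ) :
    (u ^ a * v ^ c) ^ d * ((u ^ b * v ^ d) ^ c)⁻¹ = u ^ (a * d - b * c) := by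
  rw [mul_inv_eq_iff_eq_mul, (huv.zpow_zpow a c).mul_zpow, (huv.zpow_zpow b d).mul_zpow,
    ← zpow_mul, ← zpow_mul, ← zpow_mul, ← zpow_mul, ← mul_assoc, ← zpow_add,
    sub_add_cancel, mul_comm c d]

lemma zpow_cramer_right {u v : G} (huv : Commute u v) (a b c d : ℤ) :
    ((u ^ a * v ^ c) ^ b)⁻¹ * (u ^ b * v ^ d) ^ a = v ^ (a * d - b * c) := by
  rw [inv_mul_eq_iff_eq_mul, (huv.zpow_zpow a c).mul_zpow, (huv.zpow_zpow b d).mul_zpow,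
    ← zpow_mul, ← zpow_mul, ← zpow_mul, ← zpow_mul, mul_assoc, ← zpow_add,
    mul_comm b a, mul_comm b c, add_sub_cancel, mul_comm d a]

lemma commute_sq_of_semiconjBy_inv {x y : G} (h : SemiconjBy x y y⁻¹) : Commute (x ^ 2) y := by
  have hsq : SemiconjBy (x * x) y y⁻¹⁻¹ := h.inv_right.mul_left h
  rwa [← sq, inv_inv] at hsq

theorem stmt_10_general {x₁ y₁ x₂ y₂ : G} {a b c d : ℤ} (hdet : a * d - b * c = 1)
    (hconj : x₁⁻¹ * y₁ * x₁ = y₁⁻¹) (hx₂ : x₂ ^ 2 = x₁ ^ (2 * a) * y₁ ^ c)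
    (hy₂ : y₂ = x₁ ^ (2 * b) * y₁ ^ d) :
    x₁ ^ 2 = x₂ ^ (2 * d) * (y₂ ^ c)⁻¹ ∧ y₁ = (x₂ ^ (2 * b))⁻¹ * y₂ ^ a := by
  have hsemi : SemiconjBy x₁⁻¹ y₁ y₁⁻¹ := eq_mul_inv_of_mul_eq hconj
  have hcomm : Commute (x₁ ^ 2) y₁ := by
    rw [← Commute.inv_left_iff, ← inv_pow]
    exact commute_sq_of_semiconjBy_inv hsemi
  have zpow_two_mul (x : G) (n : ℤ) : x ^ (2 * n) = (x ^ 2) ^ n := by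
    rw [zpow_mul, zpow_ofNat]
  rw [zpow_two_mul] at hx₂ hy₂
  constructor
  · rw [zpow_two_mul, hx₂, hy₂, zpow_cramer_left hcomm, hdet, zpow_one]
  · rw [zpow_two_mul, hx₂, hy₂, zpow_cramer_right hcomm, hdet, zpow_one]

end Group

namespace quotientCuspRels

variable (a b c d : ℕ)

lemma inv_of_zero_mul_of_one_mul_of_zero :
    (PresentedGroup.of 0 : PresentedGroup (quotientCuspRels a b c d))⁻¹ * PresentedGroup.of 1 *
      PresentedGroup.of 0 = (PresentedGroup.of 1)⁻¹ :=
  mul_eq_one_iff_eq_inv.mp (PresentedGroup.one_of_mem (Or.inl rfl))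

lemma of_two_sq :
    (PresentedGroup.of 2 : PresentedGroup (quotientCuspRels a b c d)) ^ 2 =
      PresentedGroup.of 0 ^ (2 * a) * PresentedGroup.of 1 ^ c :=
  PresentedGroup.mk_eq_mk_of_mul_inv_mem (Or.inr (Or.inr (Or.inl rfl)))

lemma of_three :
    (PresentedGroup.of 3 : PresentedGroup (quotientCuspRels a b c d)) =
      PresentedGroup.of 0 ^ (2 * b) * PresentedGroup.of 1 ^ d :=
  PresentedGroup.mk_eq_mk_of_mul_inv_mem (Or.inr (Or.inr (Or.inr rfl)))

end quotientCuspRels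

theorem stmt_10 (a b c d : ℕ) (ha : 0 < a) (hb : 0 < b) (hc : 0 < c) (hd : 0 < d)
    (hdet : a * d = b * c + 1) :
    ((PresentedGroup.of 0 : PresentedGroup (quotientCuspRels a b c d)) ^ 2 =
        (PresentedGroup.of 2) ^ (2 * d) * ((PresentedGroup.of 3) ^ c)⁻¹) ∧
      ((PresentedGroup.of 1 : PresentedGroup (quotientCuspRels a b c d)) =
        ((PresentedGroup.of 2) ^ (2 * b))⁻¹ * (PresentedGroup.of 3) ^ a) := by
  have hdet' : (a * d - b * c : ℤ) = 1 := by lia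
  exact_mod_cast stmt_10_general hdet'
    (quotientCuspRels.inv_of_zero_mul_of_one_mul_of_zero a b c d)
    (mod_cast quotientCuspRels.of_two_sq a b c d) (mod_cast quotientCuspRels.of_three a b c d)
end
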